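/- arXiv:1302.4885 — 2 statements merged into one kernel-verified Lean document; each statement's English description precedes it below -/
import Mathlib

section
/- For every z ∈ ℂ with Im z > 0, the Cauchy transform of the logistic distribution satisfies ∫_ℝ (π/(2 cosh²(πx)))/(z − x) dx = Σ_{n=1}^∞ i/(z + (n − 1/2)i)², where the series converges absolutely. -/
open MeasureTheory

/-!
Since `1 / (z - x) = -i ∫₀^∞ exp (it(z - x)) dt` for `Im z > 0`, a Cauchy transform on the upper
half-plane is a Laplace transform of the Fourier transform. The logistic law is the image of the
uniform law on `(0, 1)` under the inverse of the sigmoid, which turns its exponential moments into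
Beta integrals `B(1 + s, 1 - s)`; by the reflection formula its Fourier transform is
`(t / 2) / sinh (t / 2)`. Expanding `1 / sinh` as a geometric series and integrating termwise
leaves the Gamma integrals `∫₀^∞ t exp (-rt) dt = 1 / r²` with `r = n + 1/2 - iz`.
-/

open Complex Set
open scoped Nat

theorem integral_div_sub_eq_integral_Ioi_cexp {μ : Measure ℝ} [SFinite μ] {f : ℝ → ℂ}
    (hf : Integrable f μ) {z : ℂ} (hz : 0 < z.im) :
    ∫ x, f x / (z - x) ∂μ =
      -I * ∫ t in Ioi (0 : ℝ), cexp (I * z * t) * ∫ x, f x * cexp (-(I * t * x)) ∂μ := by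
  have hdecay (x : ℝ) : (I * (z - x)).re < 0 := by simpa using hz
  have hkernel (x : ℝ) : f x / (z - x) =
      -I * ∫ t in Ioi (0 : ℝ), f x * cexp (I * (z - x) * t) := by
    have hne : z - x ≠ 0 := fun h ↦ (hdecay x).ne (by simp [h])
    rw [integral_const_mul, integral_exp_mul_complex_Ioi (hdecay x)]
    simp only [ofReal_zero, mul_zero, Complex.exp_zero]
    field_simp
  have hprod : Integrable (fun p : ℝ × ℝ ↦ f p.1 * cexp (I * (z - p.1) * p.2))
      (μ.prod (volume.restrict (Ioi 0))) := by
    have hexp : IntegrableOn (fun t : ℝ ↦ cexp (I * z * t)) (Ioi 0) :=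
      integrableOn_exp_mul_complex_Ioi (by simpa using hz) 0
    refine ((hf.mul_prod hexp).mul_bdd (c := 1) (g := fun p ↦ cexp (-(I * p.2 * p.1)))
      (by fun_prop) (.of_forall fun p ↦ ?_)).congr (.of_forall fun p ↦ ?_)
    · simp [norm_exp]
    · simp only [mul_assoc, ← Complex.exp_add]
      ring_nf
  calc ∫ x, f x / (z - x) ∂μ
      = -I * ∫ x, (∫ t in Ioi (0 : ℝ), f x * cexp (I * (z - x) * t)) ∂μ := by
        simp_rw [hkernel, integral_const_mul]
    _ = -I * ∫ t in Ioi (0 : ℝ), ∫ x, f x * cexp (I * (z - x) * t) ∂μ := by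
        rw [integral_integral_swap hprod]
    _ = _ := by
        congr! 3 with t
        rw [← integral_const_mul]
        congr! 2
        rw [mul_left_comm, ← Complex.exp_add]
        ring_nf

theorem integral_Ioo_zero_one_eq_integral_sigmoid {E : Type*} [NormedAddCommGroup E]
    [NormedSpace ℝ E] (g : ℝ → E) :
    ∫ u in Ioo 0 1, g u =
      ∫ x, (Real.sigmoid x * Real.sigmoid (-x)) • g (Real.sigmoid x) := by
  rw [← Real.range_sigmoid, ← image_univ,
    integral_image_eq_integral_abs_deriv_smul MeasurableSet.univ
      (fun x _ ↦ (Real.hasDerivAt_sigmoid x).hasDerivWithinAt) Real.sigmoid_injective.injOn,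
    setIntegral_univ]
  refine integral_congr_ae (.of_forall fun x ↦ ?_)
  simp only [← Real.sigmoid_neg]
  rw [abs_of_pos (mul_pos x.sigmoid_pos (-x).sigmoid_pos)]

theorem sigmoid_cpow_mul_sigmoid_neg_cpow_neg (s : ℂ) (x : ℝ) :
    (Real.sigmoid x : ℂ) ^ s * (Real.sigmoid (-x) : ℂ) ^ (-s) = cexp (s * x) := by
  have hne : (Real.sigmoid x : ℂ) ≠ 0 := ofReal_ne_zero.2 x.sigmoid_pos.ne'
  rw [← Real.sigmoid_mul_rexp_neg, ofReal_mul,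
    mul_cpow_ofReal_nonneg x.sigmoid_nonneg (Real.exp_pos _).le, ← mul_assoc,
    ← cpow_add _ _ hne, add_neg_cancel, cpow_zero, one_mul,
    cpow_def_of_ne_zero (ofReal_ne_zero.2 (Real.exp_ne_zero _)), ← ofReal_log (Real.exp_pos _).le,
    Real.log_exp]
  push_cast
  ring_nf

theorem integral_sigmoid_mul_sigmoid_neg_mul_cexp {s : ℂ} (hs : |s.re| < 1) :
    ∫ x : ℝ, (Real.sigmoid x * Real.sigmoid (-x) : ℝ) * cexp (s * x) =
      Complex.Gamma (1 + s) * Complex.Gamma (1 - s) := by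
  obtain ⟨hs₁, hs₂⟩ := abs_lt.1 hs
  rw [Gamma_mul_Gamma_eq_betaIntegral (by simp; linarith) (by simpa using hs₂), betaIntegral,
    intervalIntegral.integral_of_le zero_le_one, integral_Ioc_eq_integral_Ioo,
    integral_Ioo_zero_one_eq_integral_sigmoid,
    show 1 + s + (1 - s) = 2 by ring, Gamma_ofNat_eq_factorial]
  simp only [← sigmoid_cpow_mul_sigmoid_neg_cpow_neg, Real.sigmoid_neg, real_smul]
  simp

theorem Gamma_one_add_mul_Gamma_one_sub {s : ℂ} (hs : s ≠ 0) :
    Complex.Gamma (1 + s) * Complex.Gamma (1 - s) = Real.pi * s / sin (Real.pi * s) := by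
  rw [add_comm, Gamma_add_one s hs, mul_assoc, Complex.Gamma_mul_Gamma_one_sub]
  ring

theorem sigmoid_mul_sigmoid_neg (x : ℝ) :
    Real.sigmoid x * Real.sigmoid (-x) = 1 / (4 * Real.cosh (x / 2) ^ 2) := by
  have hsq : Real.exp x = Real.exp (x / 2) ^ 2 := by rw [← Real.exp_nat_mul]; ring_nf
  rw [Real.sigmoid_def, Real.sigmoid_def, neg_neg, Real.cosh_eq, Real.exp_neg, Real.exp_neg, hsq]
  field_simp
  ring

/-- The density `q` of the logistic distribution `μ₂`: the centred one, with variance `1 / 12`. -/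
noncomputable def logisticDensity (x : ℝ) : ℝ := Real.pi / (2 * Real.cosh (Real.pi * x) ^ 2)

theorem logisticDensity_eq_sigmoid (x : ℝ) : logisticDensity x =
    2 * Real.pi * (Real.sigmoid (2 * Real.pi * x) * Real.sigmoid (-(2 * Real.pi * x))) := by
  rw [sigmoid_mul_sigmoid_neg, logisticDensity]
  ring_nf

theorem integral_logisticDensity_mul_cexp {s : ℂ} (hs : |s.re| < 2 * Real.pi) :
    ∫ x, logisticDensity x * cexp (s * x) =
      Complex.Gamma (1 + s / (2 * Real.pi)) * Complex.Gamma (1 - s / (2 * Real.pi)) := by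
  have hpi : 0 < 2 * Real.pi := Real.two_pi_pos
  have hre : |(s / (2 * Real.pi)).re| < 1 := by
    rw [← ofReal_ofNat, ← ofReal_mul, div_ofReal_re, abs_div, abs_of_pos hpi]
    exact (div_lt_one hpi).2 hs
  rw [← integral_sigmoid_mul_sigmoid_neg_mul_cexp hre]
  have hscale := Measure.integral_comp_mul_left
    (fun y : ℝ ↦ ((Real.sigmoid y * Real.sigmoid (-y) : ℝ) : ℂ) * cexp (s / (2 * Real.pi) * y))
    (2 * Real.pi)
  rw [abs_of_pos (inv_pos.2 hpi), eq_inv_smul_iff₀ hpi.ne', ← integral_smul] at hscale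
  rw [← hscale]
  refine integral_congr_ae (.of_forall fun x ↦ ?_)
  simp only [logisticDensity_eq_sigmoid, real_smul]
  push_cast
  field_simp

theorem integrable_logisticDensity : Integrable (fun x ↦ (logisticDensity x : ℂ)) := by
  have htotal := integral_logisticDensity_mul_cexp (s := 0) (by simp [Real.pi_pos])
  simp only [zero_mul, zero_div, Complex.exp_zero, mul_one, add_zero, sub_zero,
    Complex.Gamma_one] at htotal
  exact .of_integral_ne_zero (htotal ▸ one_ne_zero)

theorem integral_logisticDensity_mul_cexp_neg_I {t : ℝ} (ht : t ≠ 0) :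
    ∫ x, logisticDensity x * cexp (-(I * t * x)) = t / (2 * sinh (t / 2)) := by
  have hne : -I * t / (2 * Real.pi) ≠ 0 := by simp [ht, Real.pi_ne_zero]
  have harg : Real.pi * (-I * t / (2 * Real.pi)) = -(t / 2) * I := by
    field_simp
  simp only [← neg_mul]
  rw [integral_logisticDensity_mul_cexp (by simp [Real.pi_pos]),
    Gamma_one_add_mul_Gamma_one_sub hne, harg, neg_mul, Complex.sin_neg, sin_mul_I]
  field_simp

theorem inv_two_mul_sinh_half (t : ℂ) :
    (2 * sinh (t / 2))⁻¹ = cexp (-(t / 2)) / (1 - cexp (-t)) := by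
  have hfactor : 1 - cexp (-t) = cexp (-(t / 2)) * (2 * sinh (t / 2)) := by
    rw [sinh, mul_div_cancel₀ _ two_ne_zero, mul_sub, ← Complex.exp_add, ← Complex.exp_add,
      neg_add_cancel, Complex.exp_zero, ← neg_add, add_halves]
  rw [hfactor, div_mul_cancel_left₀ (Complex.exp_ne_zero _)]

theorem integral_norm_pow_mul_cexp_neg_mul_Ioi (k : ℕ) {r : ℂ} (hr : 0 < r.re) :
    ∫ t in Ioi (0 : ℝ), ‖(t : ℂ) ^ k * cexp (-r * t)‖ = k ! / r.re ^ (k + 1) := by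
  have hGamma := Real.integral_rpow_mul_exp_neg_mul_Ioi (a := k + 1) (by positivity) hr
  rw [Real.Gamma_nat_eq_factorial, ← Nat.cast_succ, Real.rpow_natCast, one_div, inv_pow,
    ← div_eq_inv_mul] at hGamma
  rw [← hGamma]
  refine setIntegral_congr_fun measurableSet_Ioi fun t (ht : 0 < t) ↦ ?_
  simp [norm_exp, abs_of_pos ht]

theorem integrableOn_pow_mul_cexp_neg_mul_Ioi (k : ℕ) {r : ℂ} (hr : 0 < r.re) :
    IntegrableOn (fun t : ℝ ↦ (t : ℂ) ^ k * cexp (-r * t)) (Ioi 0) := by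
  refine (integrable_norm_iff (by fun_prop)).1 (.of_integral_ne_zero ?_)
  rw [integral_norm_pow_mul_cexp_neg_mul_Ioi k hr]
  positivity

theorem hasDerivAt_pow_mul_cexp_neg_mul (k : ℕ) (r : ℂ) (t : ℝ) :
    HasDerivAt (fun t : ℝ ↦ (t : ℂ) ^ (k + 1) * cexp (-r * t))
      ((k + 1) * ((t : ℂ) ^ k * cexp (-r * t)) - r * ((t : ℂ) ^ (k + 1) * cexp (-r * t))) t := by
  have hpow : HasDerivAt (fun w : ℂ ↦ w ^ (k + 1)) ((k + 1) * (t : ℂ) ^ k) t := by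
    simpa using hasDerivAt_pow (k + 1) (t : ℂ)
  have hexp : HasDerivAt (fun w : ℂ ↦ cexp (-r * w)) (cexp (-r * t) * -r) t := by
    simpa using ((hasDerivAt_id (t : ℂ)).const_mul (-r)).cexp
  exact (hpow.mul hexp).comp_ofReal.congr_deriv (by ring)

theorem mul_integral_pow_succ_mul_cexp_neg_mul_Ioi (k : ℕ) {r : ℂ} (hr : 0 < r.re) :
    r * ∫ t in Ioi (0 : ℝ), (t : ℂ) ^ (k + 1) * cexp (-r * t) =
      (k + 1) * ∫ t in Ioi (0 : ℝ), (t : ℂ) ^ k * cexp (-r * t) := by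
  have hk := (integrableOn_pow_mul_cexp_neg_mul_Ioi k hr).const_mul (k + 1 : ℂ)
  have hsucc := integrableOn_pow_mul_cexp_neg_mul_Ioi (k + 1) hr
  have hderiv := hasDerivAt_pow_mul_cexp_neg_mul k r
  have hint := hk.sub (hsucc.const_mul r)
  have hFTC := integral_Ioi_of_hasDerivAt_of_tendsto' (fun t _ ↦ hderiv t) hint
    (tendsto_zero_of_hasDerivAt_of_integrableOn_Ioi (fun t _ ↦ hderiv t) hint hsucc)
  rw [integral_sub hk (hsucc.const_mul r), integral_const_mul, integral_const_mul, ofReal_zero,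
    zero_pow k.succ_ne_zero, zero_mul, sub_zero] at hFTC
  exact (sub_eq_zero.1 hFTC).symm

theorem integral_pow_mul_cexp_neg_mul_Ioi (k : ℕ) {r : ℂ} (hr : 0 < r.re) :
    ∫ t in Ioi (0 : ℝ), (t : ℂ) ^ k * cexp (-r * t) = k ! / r ^ (k + 1) := by
  have hne : r ≠ 0 := fun h ↦ hr.ne' (by simp [h])
  induction k with
  | zero =>
    simpa [neg_div_neg_eq] using integral_exp_mul_complex_Ioi (a := -r) (by simpa using hr) 0
  | succ k ih =>
    rw [← mul_right_inj' hne, mul_integral_pow_succ_mul_cexp_neg_mul_Ioi k hr, ih,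
      Nat.factorial_succ]
    push_cast
    field_simp
    ring

theorem hasSum_cexp_neg_add_nat_mul (w : ℂ) {t : ℝ} (ht : 0 < t) :
    HasSum (fun n : ℕ ↦ cexp (-(w + n) * t)) (cexp (-w * t) / (1 - cexp (-t))) := by
  have hgeom : HasSum (fun n : ℕ ↦ cexp (-t) ^ n) (1 - cexp (-t))⁻¹ :=
    hasSum_geometric_of_norm_lt_one (by simpa [norm_exp] using ht)
  refine (hgeom.mul_left (cexp (-w * t))).congr_fun fun n ↦ ?_
  rw [← Complex.exp_nat_mul, ← Complex.exp_add]
  ring_nf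

theorem hasSum_factorial_div_add_nat_pow {k : ℕ} (hk : k ≠ 0) {w : ℂ} (hw : 0 < w.re) :
    HasSum (fun n : ℕ ↦ k ! / (w + n) ^ (k + 1))
      (∫ t in Ioi (0 : ℝ), (t : ℂ) ^ k * (cexp (-w * t) / (1 - cexp (-t)))) := by
  have hre (n : ℕ) : 0 < (w + n).re := by
    rw [add_re, natCast_re]
    positivity
  have hsummable : Summable fun n : ℕ ↦ (k ! : ℝ) / (w + n).re ^ (k + 1) := by
    have hrpow := (Real.summable_one_div_nat_add_rpow w.re (k + 1 : ℕ)).2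
      (by exact_mod_cast (by lia : 1 < k + 1))
    refine (hrpow.mul_left (k ! : ℝ)).congr fun n ↦ ?_
    rw [Real.rpow_natCast, abs_of_pos (by positivity), add_re, natCast_re, add_comm, mul_one_div]
  have htermwise := hasSum_integral_of_summable_integral_norm
    (fun n ↦ integrableOn_pow_mul_cexp_neg_mul_Ioi k (hre n))
    (by simpa only [integral_norm_pow_mul_cexp_neg_mul_Ioi k (hre _)] using hsummable)
  have hexpand : ∫ t in Ioi (0 : ℝ), (t : ℂ) ^ k * (cexp (-w * t) / (1 - cexp (-t))) =
      ∫ t in Ioi (0 : ℝ), ∑' n : ℕ, (t : ℂ) ^ k * cexp (-(w + n) * t) :=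
    setIntegral_congr_fun measurableSet_Ioi fun t ht ↦
      ((hasSum_cexp_neg_add_nat_mul w ht).mul_left _).tsum_eq.symm
  rw [hexpand]
  simpa only [integral_pow_mul_cexp_neg_mul_Ioi k (hre _)] using htermwise

theorem integral_logisticDensity_div_sub {z : ℂ} (hz : 0 < z.im) :
    ∫ x, (logisticDensity x : ℂ) / (z - x) =
      -I * ∫ t in Ioi (0 : ℝ), t * (cexp (-(1 / 2 - I * z) * t) / (1 - cexp (-t))) := by
  rw [integral_div_sub_eq_integral_Ioi_cexp integrable_logisticDensity hz]
  congr 1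
  refine setIntegral_congr_fun measurableSet_Ioi fun t (ht : 0 < t) ↦ ?_
  have hexp : cexp (-(1 / 2 - I * z) * t) = cexp (I * z * t) * cexp (-(t / 2)) := by
    rw [← Complex.exp_add]
    ring_nf
  simp only [integral_logisticDensity_mul_cexp_neg_I ht.ne', hexp]
  rw [div_eq_mul_inv (t : ℂ), inv_two_mul_sinh_half]
  ring

/-- For `Im z > 0`, the Cauchy transform of the logistic distribution equals the
absolutely convergent series `∑_{n=1}^∞ i/(z + (n − 1/2)i)²` (indexed here by
`n : ℕ` via `n + 1/2 = (n+1) − 1/2`). -/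
theorem logistic_cauchy_series (z : ℂ) (hz : 0 < z.im) :
    Summable (fun n : ℕ => Complex.I / (z + ((n : ℂ) + 1 / 2) * Complex.I) ^ 2) ∧
    (∫ x : ℝ, ((Real.pi / (2 * Real.cosh (Real.pi * x) ^ 2) : ℝ) : ℂ) / (z - (x : ℂ)))
      = ∑' n : ℕ, Complex.I / (z + ((n : ℂ) + 1 / 2) * Complex.I) ^ 2 := by
  have hre : 0 < (1 / 2 - I * z).re := by
    suffices 0 < 1 / 2 + z.im by simpa
    positivity
  have hterm (n : ℕ) : I / (z + (n + 1 / 2) * I) ^ 2 =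
      -I * ((1 ! : ℕ) / (1 / 2 - I * z + n) ^ (1 + 1)) := by
    have hrotate : 1 / 2 - I * z + n = -I * (z + (n + 1 / 2) * I) := by
      linear_combination (n + 1 / 2 : ℂ) * I_mul_I
    rw [hrotate, mul_pow]
    simp [div_eq_mul_inv]
  have hsum : HasSum (fun n : ℕ ↦ I / (z + (n + 1 / 2) * I) ^ 2)
      (∫ x, (logisticDensity x : ℂ) / (z - x)) := by
    rw [integral_logisticDensity_div_sub hz, funext hterm]
    simpa only [pow_one] using (hasSum_factorial_div_add_nat_pow one_ne_zero hre).mul_left (-I)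
  exact ⟨hsum.summable, hsum.tsum_eq.symm⟩
end

section
/- There exists an injective analytic map H from the upper half-plane ℂ⁺ = {z : Im z > 0} into the half-plane {w ∈ ℂ : Im w > −1/2} such that Σ_{n=1}^∞ i/(H(z) + (n − 1/2)i)² = 1/z for all z ∈ ℂ⁺. (This expresses that the reciprocal Cauchy transform of the logistic distribution has a univalent right inverse defined on all of ℂ⁺, i.e., the logistic distribution belongs to the class UI of freely infinitely divisible measures.) -/
/-!
Write `w = i (s - 1/2)`. The series becomes `-i ψ₁(s)` with the trigamma function `ψ₁`, and
`Im w > -1/2` becomes `Re s > 0`; so it suffices to find a right inverse of `f = 1 / ψ₁` on the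
right half-plane, evaluated at `-i z`.

The point is that `Re f(s) ≤ Re s`. By the reflection formula,
`2 Re ψ₁(iy) = -1 / y² - π² / sinh² (πy)`, so `Re f ≤ 0` on the imaginary axis; for real `x > 0`,
`ψ₁(x) ≥ 1 / x` gives `f(x) ≤ x`; and `f` grows linearly. Phragmén–Lindelöf applied to
`exp (f(s) - s)` yields the inequality in the whole half-plane.

Then `p(s) = s - f(s)` has nonnegative real part, and Schwarz–Pick for `p` forbids both
`f(a) = f(b)` with `a ≠ b` and a zero of the derivative at `b` as long as `Re f(b) > 0`: in either
case the difference quotient of `p` would be `1`, although `|p(a) + conj (p(b))| < |a + conj b|`.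
So `f` is injective and open on `{Re s > 0, Re f(s) > 0}`. Since `f` tends to infinity at infinity
and `Re f(s) ≤ Re s` keeps preimages away from the imaginary axis, the image is also closed in the
half-plane, hence all of it.
-/

open Bornology Complex ComplexConjugate Filter Metric Set Topology

section HalfPlane

variable {f p : ℂ → ℂ} {a b w c : ℂ}

lemma isOpen_rightHalfPlane : IsOpen {s : ℂ | 0 < s.re} :=
  isOpen_lt continuous_const continuous_re

lemma sq_norm_add_conj_sub_sq_norm_sub (w c : ℂ) :
    ‖w + conj c‖ ^ 2 - ‖w - c‖ ^ 2 = 4 * (w.re * c.re) := by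
  simp only [← normSq_eq_norm_sq, normSq_apply, add_re, add_im, sub_re, sub_im, conj_re, conj_im]
  ring

lemma norm_sub_lt_norm_add_conj_iff (hc : 0 < c.re) : ‖w - c‖ < ‖w + conj c‖ ↔ 0 < w.re := by
  rw [← sq_lt_sq₀ (norm_nonneg _) (norm_nonneg _), ← sub_pos, sq_norm_add_conj_sub_sq_norm_sub,
    mul_pos_iff_of_pos_left four_pos, mul_pos_iff_of_pos_right hc]

lemma norm_add_conj_pos (hw : 0 < w.re) (hc : 0 < c.re) : 0 < ‖w + conj c‖ :=
  (norm_nonneg _).trans_lt ((norm_sub_lt_norm_add_conj_iff hc).2 hw)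

lemma norm_sub_two_mul_lt {r : ℝ} (hr : 0 < r) (hw : r < w.re) : ‖w - 2 * r‖ < ‖w‖ := by
  have h := (norm_sub_lt_norm_add_conj_iff (w := w - r) (c := r) (by simpa using hr)).2
    (by simpa using hw)
  rwa [conj_ofReal, sub_add_cancel, sub_sub, ← two_mul] at h

/-- The inverse of the Cayley transform `w ↦ (w - b) / (w + conj b)` of the right half-plane; it
maps the unit disc onto the half-plane and `0` to `b`. -/
noncomputable def cayleyInv (b ζ : ℂ) : ℂ := (b + conj b * ζ) / (1 - ζ)

lemma one_sub_ne_zero_of_mem_ball {ζ : ℂ} (hζ : ζ ∈ ball (0 : ℂ) 1) : 1 - ζ ≠ 0 := by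
  rintro h
  simp [← sub_eq_zero.1 h] at hζ

lemma cayleyInv_zero (b : ℂ) : cayleyInv b 0 = b := by simp [cayleyInv]

lemma re_cayleyInv_pos (hb : 0 < b.re) {ζ : ℂ} (hζ : ζ ∈ ball (0 : ℂ) 1) :
    0 < (cayleyInv b ζ).re := by
  have hden := one_sub_ne_zero_of_mem_ball hζ
  have hsub : cayleyInv b ζ - b = (b + conj b) / (1 - ζ) * ζ := by
    rw [cayleyInv]; field_simp; ring
  have hadd : cayleyInv b ζ + conj b = (b + conj b) / (1 - ζ) := by
    rw [cayleyInv]; field_simp; ring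
  rw [← norm_sub_lt_norm_add_conj_iff hb, hsub, hadd, norm_mul]
  have hpos : 0 < ‖(b + conj b) / (1 - ζ)‖ :=
    norm_div (b + conj b) (1 - ζ) ▸ div_pos (norm_add_conj_pos hb hb) (norm_pos_iff.2 hden)
  exact mul_lt_of_lt_one_right hpos (by simpa using hζ)

lemma differentiableOn_cayleyInv (b : ℂ) : DifferentiableOn ℂ (cayleyInv b) (ball 0 1) := by
  unfold cayleyInv
  fun_prop (disch := exact fun ζ hζ => one_sub_ne_zero_of_mem_ball hζ)

lemma cayleyInv_cayley (ha : 0 < a.re) (hb : 0 < b.re) :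
    cayleyInv b ((a - b) / (a + conj b)) = a := by
  have hab : a + conj b ≠ 0 := norm_pos_iff.1 (norm_add_conj_pos ha hb)
  have hbb : b + conj b ≠ 0 := norm_pos_iff.1 (norm_add_conj_pos hb hb)
  have hden : 1 - (a - b) / (a + conj b) = (b + conj b) / (a + conj b) := by
    field_simp; ring
  rw [cayleyInv, hden]
  field_simp
  ring

/-- The **Schwarz–Pick lemma** for the right half-plane. -/
lemma norm_sub_mul_norm_add_conj_le (hp : DifferentiableOn ℂ p {s | 0 < s.re})
    (hpos : MapsTo p {s | 0 < s.re} {s | 0 < s.re}) (ha : 0 < a.re) (hb : 0 < b.re) :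
    ‖p a - p b‖ * ‖a + conj b‖ ≤ ‖a - b‖ * ‖p a + conj (p b)‖ := by
  set g : ℂ → ℂ := fun ζ => (p (cayleyInv b ζ) - p b) / (p (cayleyInv b ζ) + conj (p b)) with hg
  have hmaps : MapsTo (cayleyInv b) (ball 0 1) {s | 0 < s.re} := fun ζ => re_cayleyInv_pos hb
  have hden : ∀ ζ ∈ ball (0 : ℂ) 1, p (cayleyInv b ζ) + conj (p b) ≠ 0 := fun ζ hζ =>
    norm_pos_iff.1 (norm_add_conj_pos (hpos (hmaps hζ)) (hpos hb))
  have hpφ : DifferentiableOn ℂ (fun ζ => p (cayleyInv b ζ)) (ball 0 1) :=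
    hp.comp (differentiableOn_cayleyInv b) hmaps
  have hgd : DifferentiableOn ℂ g (ball 0 1) := (hpφ.sub_const _).div (hpφ.add_const _) hden
  have hgm : MapsTo g (ball 0 1) (closedBall 0 1) := fun ζ hζ => by
    rw [mem_closedBall_zero_iff, norm_div, div_le_one (norm_pos_iff.2 (hden ζ hζ))]
    exact ((norm_sub_lt_norm_add_conj_iff (hpos hb)).2 (hpos (hmaps hζ))).le
  have hg0 : g 0 = 0 := by simp [hg, cayleyInv_zero]
  have hζ : ‖(a - b) / (a + conj b)‖ < 1 := by
    rw [norm_div, div_lt_one (norm_add_conj_pos ha hb)]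
    exact (norm_sub_lt_norm_add_conj_iff hb).2 ha
  have hschwarz := norm_le_norm_of_mapsTo_ball hgd hgm hg0 hζ
  simp only [hg, cayleyInv_cayley ha hb, norm_div] at hschwarz
  rwa [div_le_div_iff₀ (norm_add_conj_pos (hpos ha) (hpos hb)) (norm_add_conj_pos ha hb)]
    at hschwarz

/-- The Schwarz–Pick lemma in divided form, including the derivative bound at `a = b`. Adding
`ε > 0` to `p` makes its real part positive; the diagonal case is the limit `z → b`. -/
lemma norm_dslope_mul_norm_add_conj_le (hp : DifferentiableOn ℂ p {s | 0 < s.re})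
    (hnonneg : ∀ s : ℂ, 0 < s.re → 0 ≤ (p s).re) (ha : 0 < a.re) (hb : 0 < b.re) :
    ‖dslope p b a‖ * ‖a + conj b‖ ≤ ‖p a + conj (p b)‖ := by
  have off_diagonal : ∀ z : ℂ, 0 < z.re → z ≠ b →
      ‖dslope p b z‖ * ‖z + conj b‖ ≤ ‖p z + conj (p b)‖ := by
    intro z hz hne
    have perturbed : ∀ ε : ℝ, 0 < ε →
        ‖p z - p b‖ * ‖z + conj b‖ ≤ ‖z - b‖ * ‖p z + conj (p b) + 2 * ε‖ := by
      intro ε hε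
      have h := norm_sub_mul_norm_add_conj_le (p := fun s => p s + ε) (hp.add_const _)
        (fun s hs => by simpa using add_pos_of_nonneg_of_pos (hnonneg s hs) hε) hz hb
      rw [add_sub_add_right_eq_sub, map_add, conj_ofReal, add_add_add_comm, ← two_mul] at h
      exact h
    have hlim : Tendsto (fun ε : ℝ => ‖z - b‖ * ‖p z + conj (p b) + 2 * ε‖) (𝓝[>] 0)
        (𝓝 (‖z - b‖ * ‖p z + conj (p b)‖)) :=
      (Continuous.tendsto' (by fun_prop) _ _ (by simp)).mono_left nhdsWithin_le_nhds
    have h := ge_of_tendsto hlim (eventually_mem_nhdsWithin.mono perturbed)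
    rw [← sub_smul_dslope, norm_smul, mul_assoc] at h
    exact le_of_mul_le_mul_left h (norm_pos_iff.2 (sub_ne_zero.2 hne))
  rcases eq_or_ne a b with rfl | hne
  · have hpa : DifferentiableAt ℂ p a := hp.differentiableAt (isOpen_rightHalfPlane.mem_nhds ha)
    have hdslope := (continuousAt_dslope_same.2 hpa).tendsto
    have hleft : Tendsto (fun z => ‖dslope p a z‖ * ‖z + conj a‖) (𝓝[≠] a)
        (𝓝 (‖dslope p a a‖ * ‖a + conj a‖)) :=
      (hdslope.norm.mul (tendsto_id.add_const _).norm).mono_left nhdsWithin_le_nhds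
    have hright : Tendsto (fun z => ‖p z + conj (p a)‖) (𝓝[≠] a) (𝓝 ‖p a + conj (p a)‖) :=
      (hpa.continuousAt.tendsto.add_const _).norm.mono_left nhdsWithin_le_nhds
    refine le_of_tendsto_of_tendsto hleft hright ?_
    filter_upwards [nhdsWithin_le_nhds (isOpen_rightHalfPlane.mem_nhds ha), self_mem_nhdsWithin]
      with z hz hne using off_diagonal z hz hne
  · exact off_diagonal a ha hne

lemma dslope_id_sub (hf : DifferentiableAt ℂ f b) :
    dslope (fun s => s - f s) b a = 1 - dslope f b a := by
  rcases eq_or_ne a b with rfl | hne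
  · simp [deriv_fun_sub differentiableAt_fun_id hf]
  · have := sub_ne_zero.2 hne
    rw [dslope_of_ne _ hne, dslope_of_ne _ hne, slope_def_field, slope_def_field]
    field_simp
    ring

end HalfPlane

section RightInverse

variable {f : ℂ → ℂ} {a b t : ℂ}

lemma dslope_ne_zero_of_re_le (hf : DifferentiableOn ℂ f {s | 0 < s.re})
    (hre : ∀ s : ℂ, 0 < s.re → (f s).re ≤ s.re) (ha : 0 < a.re) (hb : 0 < b.re)
    (hfb : 0 < (f b).re) (hab : f a = f b) : dslope f b a ≠ 0 := by
  intro h0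
  have hpick := norm_dslope_mul_norm_add_conj_le (p := fun s => s - f s)
    (differentiableOn_id.sub hf) (fun s hs => by simpa using hre s hs) ha hb
  rw [dslope_id_sub (hf.differentiableAt (isOpen_rightHalfPlane.mem_nhds hb)), h0, hab, map_sub,
    sub_add_sub_comm, add_conj (f b), sub_zero, norm_one, one_mul] at hpick
  push_cast at hpick
  refine (norm_sub_two_mul_lt hfb ?_).not_ge hpick
  have := hre b hb
  simp only [add_re, conj_re]
  linarith

lemma injOn_of_re_le (hf : DifferentiableOn ℂ f {s | 0 < s.re})
    (hre : ∀ s : ℂ, 0 < s.re → (f s).re ≤ s.re) :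
    InjOn f {s | 0 < s.re ∧ 0 < (f s).re} := by
  rintro a ⟨ha, -⟩ b ⟨hb, hfb⟩ hab
  have h := sub_smul_dslope f b a
  rw [hab, sub_self, smul_eq_zero, sub_eq_zero] at h
  exact h.resolve_right (dslope_ne_zero_of_re_le hf hre ha hb hfb hab)

lemma deriv_ne_zero_of_re_le (hf : DifferentiableOn ℂ f {s | 0 < s.re})
    (hre : ∀ s : ℂ, 0 < s.re → (f s).re ≤ s.re) (hb : 0 < b.re) (hfb : 0 < (f b).re) :
    deriv f b ≠ 0 :=
  dslope_same f b ▸ dslope_ne_zero_of_re_le hf hre hb hb hfb rfl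

lemma hasStrictDerivAt_of_re_pos (hf : DifferentiableOn ℂ f {s | 0 < s.re}) (hb : 0 < b.re) :
    HasStrictDerivAt f (deriv f b) b :=
  (hf.analyticAt (isOpen_rightHalfPlane.mem_nhds hb)).hasStrictDerivAt

lemma isOpen_image_of_re_le (hf : DifferentiableOn ℂ f {s | 0 < s.re})
    (hre : ∀ s : ℂ, 0 < s.re → (f s).re ≤ s.re) :
    IsOpen (f '' {s | 0 < s.re ∧ 0 < (f s).re}) := by
  have hU : IsOpen {s | 0 < s.re ∧ 0 < (f s).re} :=
    hf.continuousOn.isOpen_inter_preimage isOpen_rightHalfPlane isOpen_rightHalfPlane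
  rw [isOpen_iff_mem_nhds]
  rintro _ ⟨s, hs, rfl⟩
  rw [← (hasStrictDerivAt_of_re_pos hf hs.1).map_nhds_eq (deriv_ne_zero_of_re_le hf hre hs.1 hs.2)]
  exact image_mem_map (hU.mem_nhds hs)

lemma mem_image_of_mem_closure (hf : DifferentiableOn ℂ f {s | 0 < s.re})
    (hre : ∀ s : ℂ, 0 < s.re → (f s).re ≤ s.re)
    (hinf : Tendsto f (cobounded ℂ ⊓ 𝓟 {s | 0 < s.re}) (cobounded ℂ)) (ht : 0 < t.re)
    (hcl : t ∈ closure (f '' {s | 0 < s.re})) : t ∈ f '' {s | 0 < s.re} := by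
  obtain ⟨u, hu, hut⟩ := mem_closure_iff_seq_limit.1 hcl
  choose s hs hsu using hu
  obtain rfl : u = fun n => f (s n) := funext fun n => (hsu n).symm
  have hbdd : IsBounded {z : ℂ | 0 < z.re → f z ∉ ball t 1}ᶜ := by
    rw [isBounded_compl_iff, isCobounded_def]
    exact eventually_inf_principal.1
      (hinf.eventually (isBounded_def.1 (isBounded_ball (x := t) (r := 1))))
  have hmem : ∀ᶠ n in atTop, s n ∈ {z : ℂ | 0 < z.re → f z ∉ ball t 1}ᶜ :=
    (hut.eventually (ball_mem_nhds t one_pos)).mono fun n hn h => h (hs n) hn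
  obtain ⟨z, -, φ, hφ, hz⟩ := tendsto_subseq_of_frequently_bounded hbdd hmem.frequently
  have hft : Tendsto (fun n => f (s (φ n))) atTop (𝓝 t) := hut.comp hφ.tendsto_atTop
  have htz : t.re ≤ z.re :=
    le_of_tendsto_of_tendsto' ((continuous_re.tendsto t).comp hft)
      ((continuous_re.tendsto z).comp hz) fun n => hre _ (hs _)
  have hz0 : 0 < z.re := ht.trans_le htz
  have hfz : ContinuousAt f z := hf.continuousOn.continuousAt (isOpen_rightHalfPlane.mem_nhds hz0)
  exact ⟨z, hz0, tendsto_nhds_unique (hfz.tendsto.comp hz) hft⟩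

lemma surjOn_of_re_le (hf : DifferentiableOn ℂ f {s | 0 < s.re})
    (hre : ∀ s : ℂ, 0 < s.re → (f s).re ≤ s.re)
    (hinf : Tendsto f (cobounded ℂ ⊓ 𝓟 {s | 0 < s.re}) (cobounded ℂ))
    (hne : {s | 0 < s.re ∧ 0 < (f s).re}.Nonempty) :
    SurjOn f {s | 0 < s.re ∧ 0 < (f s).re} {t | 0 < t.re} := by
  refine (convex_halfSpace_re_gt 0).isPreconnected.subset_of_closure_inter_subset
    (isOpen_image_of_re_le hf hre) ?_ ?_
  · obtain ⟨s, hs⟩ := hne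
    exact ⟨f s, hs.2, mem_image_of_mem f hs⟩
  · rintro t ⟨hcl, ht⟩
    obtain ⟨s, hs, rfl⟩ := mem_image_of_mem_closure hf hre hinf ht
      (closure_mono (image_mono fun s hs => hs.1) hcl)
    exact ⟨s, ⟨hs, ht⟩, rfl⟩

theorem exists_rightInvOn_of_re_le (hf : DifferentiableOn ℂ f {s | 0 < s.re})
    (hre : ∀ s : ℂ, 0 < s.re → (f s).re ≤ s.re)
    (hinf : Tendsto f (cobounded ℂ ⊓ 𝓟 {s | 0 < s.re}) (cobounded ℂ))
    (hne : {s | 0 < s.re ∧ 0 < (f s).re}.Nonempty) :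
    ∃ g : ℂ → ℂ, DifferentiableOn ℂ g {t | 0 < t.re} ∧
      MapsTo g {t | 0 < t.re} {s | 0 < s.re} ∧ RightInvOn g f {t | 0 < t.re} := by
  set U : Set ℂ := {s | 0 < s.re ∧ 0 < (f s).re}
  have hsurj : SurjOn f U {t | 0 < t.re} := surjOn_of_re_le hf hre hinf hne
  set g := Function.invFunOn f U
  have hgU : MapsTo g {t | 0 < t.re} U := hsurj.mapsTo_invFunOn
  have hfg : RightInvOn g f {t | 0 < t.re} := hsurj.rightInvOn_invFunOn
  have hgf : LeftInvOn g f U := (injOn_of_re_le hf hre).leftInvOn_invFunOn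
  have hUo : IsOpen U :=
    hf.continuousOn.isOpen_inter_preimage isOpen_rightHalfPlane isOpen_rightHalfPlane
  refine ⟨g, fun t ht => ?_, fun t ht => (hgU ht).1, hfg⟩
  obtain ⟨hs, hfs⟩ := hgU ht
  have hstrict := (hasStrictDerivAt_of_re_pos hf hs).to_local_left_inverse
    (deriv_ne_zero_of_re_le hf hre hs hfs) (hgf.eqOn.eventuallyEq_of_mem (hUo.mem_nhds (hgU ht)))
  rw [hfg ht] at hstrict
  exact hstrict.hasDerivAt.differentiableAt.differentiableWithinAt

end RightInverse

/-- The trigamma function `ψ₁(s) = ∑ₙ 1 / (s + n) ^ 2`, the derivative of the digamma function. At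
its poles `0, -1, -2, …` the singular term takes the junk value `1 / 0 = 0`. -/
noncomputable def trigamma (s : ℂ) : ℂ := ∑' n : ℕ, 1 / (s + n) ^ 2

section Trigamma

variable {s : ℂ} {x y : ℝ}

lemma summable_one_div_add_nat_sq (s : ℂ) : Summable fun n : ℕ => 1 / (s + n) ^ 2 := by
  have h := (EisensteinSeries.linear_right_summable s 1 le_rfl).comp_injective
    (Nat.cast_injective (R := ℤ))
  refine h.congr fun n => ?_
  simp only [Function.comp_apply, Int.cast_one, one_mul, Int.cast_natCast, one_div]
  norm_cast

lemma trigamma_eq_one_div_sq_add (s : ℂ) : trigamma s = 1 / s ^ 2 + trigamma (s + 1) := by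
  rw [trigamma, (summable_one_div_add_nat_sq s).tsum_eq_zero_add, trigamma]
  simp only [Nat.cast_zero, add_zero, Nat.cast_add, Nat.cast_one, add_right_comm, ← add_assoc]

lemma trigamma_conj (s : ℂ) : trigamma (conj s) = conj (trigamma s) := by
  simp only [trigamma, conj_tsum, map_div₀, map_one, map_pow, map_add, conj_natCast]

lemma trigamma_add_trigamma_one_sub (s : ℂ) :
    trigamma s + trigamma (1 - s) = ∑' n : ℤ, 1 / (s + n) ^ 2 := by
  have hneg : ∀ n : ℕ, 1 / (s + (-((n : ℤ) + 1) : ℤ)) ^ 2 = 1 / (1 - s + n) ^ 2 := fun n => by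
    rw [← neg_sq]
    push_cast
    ring_nf
  rw [tsum_of_nat_of_neg_add_one (by simpa using summable_one_div_add_nat_sq s)
    (by simpa only [hneg] using summable_one_div_add_nat_sq (1 - s))]
  simp only [hneg, Int.cast_natCast, trigamma]

lemma trigamma_ofReal (x : ℝ) : trigamma x = ((trigamma x).re : ℂ) :=
  (conj_eq_iff_re.1 (by rw [← trigamma_conj, conj_ofReal])).symm

lemma hasSum_re_trigamma_ofReal (x : ℝ) :
    HasSum (fun n : ℕ => 1 / (x + n) ^ 2) (trigamma x).re := by
  rw [← hasSum_ofReal, ← trigamma_ofReal, trigamma]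
  push_cast
  exact (summable_one_div_add_nat_sq x).hasSum

lemma differentiableOn_trigamma : DifferentiableOn ℂ trigamma {s | 0 < s.re} := by
  intro s (hs : 0 < s.re)
  have hsum : Summable fun n : ℕ => 1 / |(n : ℝ) + s.re / 2| ^ (2 : ℝ) :=
    Real.summable_one_div_nat_add_rpow _ _ |>.2 one_lt_two
  have hopen : IsOpen {z : ℂ | s.re / 2 < z.re} := isOpen_lt continuous_const continuous_re
  have hre : ∀ (n : ℕ) (z : ℂ), s.re / 2 < z.re → n + s.re / 2 < (z + n).re := fun n z hz => by
    rw [add_re, natCast_re, add_comm]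
    gcongr
  have hdiff : DifferentiableOn ℂ trigamma {z | s.re / 2 < z.re} := by
    refine differentiableOn_tsum_of_summable_norm hsum (fun n z hz => ?_) hopen fun n z hz => ?_
    · have hne : (z + n) ^ 2 ≠ 0 := by
        refine pow_ne_zero 2 fun h => (hre n z hz).not_ge ?_
        rw [h, zero_re]
        positivity
      fun_prop (disch := exact hne)
    · have hpos : 0 < (n : ℝ) + s.re / 2 := by positivity
      rw [norm_div, norm_one, norm_pow, abs_of_pos hpos, Real.rpow_two]
      gcongr
      exact (hre n z hz).le.trans (re_le_norm _)
  exact (hdiff.differentiableAt (hopen.mem_nhds (half_lt_self hs))).differentiableWithinAt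

lemma im_mul_im_one_div_sq (w : ℂ) :
    w.im * (1 / w ^ 2).im = -(2 * w.re * w.im ^ 2 / normSq w ^ 2) := by
  rw [one_div, inv_im, map_pow, pow_two w, mul_im]
  ring

lemma im_mul_im_trigamma_neg (hs : 0 ≤ s.re) (him : s.im ≠ 0) : s.im * (trigamma s).im < 0 := by
  have hterm : ∀ n : ℕ, -(s.im * (1 / (s + n) ^ 2).im) =
      2 * (s.re + n) * s.im ^ 2 / normSq (s + n) ^ 2 := fun n => by
    have h := im_mul_im_one_div_sq (s + n)
    simp only [add_re, add_im, natCast_re, natCast_im, add_zero] at h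
    rw [h, neg_neg]
  have hnormSq : 0 < normSq (s + (1 : ℕ)) :=
    normSq_pos.2 fun h => him (by simpa using congrArg im h)
  have hsum := ((hasSum_im (summable_one_div_add_nat_sq s).hasSum).mul_left s.im).neg
  have hpos := hsum.summable.tsum_pos (fun n => by rw [hterm]; positivity) 1
    (by rw [hterm]; positivity)
  rw [hsum.tsum_eq] at hpos
  exact neg_pos.1 hpos

lemma norm_le_norm_add_nat (hs : 0 ≤ s.re) (n : ℕ) : ‖s‖ ≤ ‖s + n‖ := by
  rw [← sq_le_sq₀ (norm_nonneg _) (norm_nonneg _), ← normSq_eq_norm_sq, ← normSq_eq_norm_sq,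
    normSq_apply, normSq_apply, add_re, add_im, natCast_re, natCast_im, add_zero]
  gcongr <;> exact le_add_of_nonneg_right n.cast_nonneg

lemma norm_add_nat_pos (hs : 0 ≤ s.re) (h0 : s ≠ 0) (n : ℕ) : 0 < ‖s + n‖ :=
  (norm_pos_iff.2 h0).trans_le (norm_le_norm_add_nat hs n)

lemma norm_add_nat_le_succ (hs : 0 ≤ s.re) (n : ℕ) : ‖s + n‖ ≤ ‖s + (n + 1)‖ := by
  have h := norm_le_norm_add_nat (s := s + n) (by rw [add_re, natCast_re]; positivity) 1
  rwa [Nat.cast_one, add_assoc] at h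

lemma hasSum_one_div_mul_succ (hs : 0 ≤ s.re) (h0 : s ≠ 0) :
    HasSum (fun n : ℕ => 1 / ((s + n) * (s + (n + 1)))) (1 / s) := by
  have hne : ∀ n : ℕ, s + n ≠ 0 := fun n => norm_pos_iff.1 (norm_add_nat_pos hs h0 n)
  have hsum : Summable fun n : ℕ => 1 / ((s + n) * (s + (n + 1))) := by
    refine (summable_one_div_add_nat_sq s).norm.of_norm_bounded fun n => ?_
    have := norm_add_nat_pos hs h0 n
    rw [norm_div, norm_div, norm_mul, pow_two, norm_mul]
    gcongr
    exact norm_add_nat_le_succ hs n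
  have hstep : ∀ n : ℕ, 1 / ((s + n) * (s + (n + 1))) =
      1 / (s + n) - 1 / (s + (n + 1 : ℕ)) := fun n => by
    have hn := hne n
    have hn' := hne (n + 1)
    push_cast at hn' ⊢
    field_simp
    ring
  have hlim : Tendsto (fun n : ℕ => 1 / (s + n)) atTop (𝓝 0) := by
    simp only [one_div]
    exact tendsto_inv₀_cobounded.comp
      ((tendsto_const_add_cobounded s).comp tendsto_natCast_atTop_cobounded)
  rw [hsum.hasSum_iff_tendsto_nat]
  simp only [hstep, Finset.sum_range_sub' (fun n : ℕ => 1 / (s + n))]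
  simpa using hlim.const_sub (1 / s)

lemma hasSum_trigamma_sub_one_div (hs : 0 ≤ s.re) (h0 : s ≠ 0) :
    HasSum (fun n : ℕ => 1 / ((s + n) ^ 2 * (s + (n + 1)))) (trigamma s - 1 / s) := by
  refine ((summable_one_div_add_nat_sq s).hasSum.sub (hasSum_one_div_mul_succ hs h0)).congr_fun
    fun n => ?_
  have hn := norm_pos_iff.1 (norm_add_nat_pos hs h0 n)
  have hn' := norm_pos_iff.1 (norm_add_nat_pos hs h0 (n + 1))
  push_cast at hn'
  field_simp
  ring

lemma one_div_le_re_trigamma (hx : 0 < x) : 1 / x ≤ (trigamma x).re := by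
  have h := hasSum_re (hasSum_trigamma_sub_one_div (s := x) hx.le (mod_cast hx.ne'))
  have hterm : ∀ n : ℕ, (1 / (((x : ℂ) + n) ^ 2 * (x + (n + 1)))).re =
      1 / ((x + n) ^ 2 * (x + (n + 1))) := fun n => by norm_cast
  have hnonneg := h.nonneg fun n => by rw [hterm]; positivity
  rw [sub_re] at hnonneg
  norm_cast at hnonneg ⊢
  exact sub_nonneg.1 hnonneg

lemma re_trigamma_le (hx : 0 < x) : (trigamma x).re ≤ 1 / x ^ 2 + 1 / x := by
  have hmul : HasSum (fun n : ℕ => 1 / ((x + n) * (x + (n + 1)))) (1 / x) := by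
    exact_mod_cast hasSum_one_div_mul_succ (s := x) hx.le (mod_cast hx.ne')
  have hle : (trigamma (x + 1)).re ≤ 1 / x := by
    have hsucc := hasSum_re_trigamma_ofReal (x + 1)
    rw [ofReal_add, ofReal_one] at hsucc
    refine hasSum_le (fun n => ?_) hsucc hmul
    rw [pow_two, add_assoc, add_comm 1 (n : ℝ)]
    gcongr
    exact le_add_of_nonneg_right zero_le_one
  rw [trigamma_eq_one_div_sq_add, add_re]
  norm_cast at hle ⊢
  gcongr

lemma norm_one_div_add_nat_sq_le (hs : 0 ≤ s.re) (h0 : s ≠ 0) (n : ℕ) :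
    ‖1 / (s + n) ^ 2‖ ≤ 2 * (1 / (‖s‖ + n) ^ 2) := by
  have hpos := norm_add_nat_pos hs h0 n
  have := norm_pos_iff.2 h0
  have hsq : ‖s‖ ^ 2 + n ^ 2 ≤ ‖s + n‖ ^ 2 := by
    simp only [← normSq_eq_norm_sq, normSq_apply, add_re, add_im, natCast_re, natCast_im, add_zero]
    nlinarith [mul_nonneg hs (n.cast_nonneg (α := ℝ))]
  rw [norm_div, norm_one, norm_pow, mul_one_div, div_le_div_iff₀ (by positivity) (by positivity)]
  linarith [add_sq_le (a := ‖s‖) (b := n)]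

lemma norm_trigamma_sub_one_div_le (hs : 0 ≤ s.re) (h0 : s ≠ 0) :
    ‖trigamma s - 1 / s‖ ≤ 2 * (1 / ‖s‖ ^ 2 + 1 / ‖s‖) / ‖s‖ := by
  have hpos := norm_pos_iff.2 h0
  have hdom := ((hasSum_re_trigamma_ofReal ‖s‖).mul_left 2).div_const ‖s‖
  refine ((hasSum_trigamma_sub_one_div hs h0).norm_le_of_bounded hdom fun n => ?_).trans ?_
  · have := norm_add_nat_pos hs h0 n
    have hle : ‖s‖ ≤ ‖s + (n + 1)‖ :=
      (norm_le_norm_add_nat hs n).trans (norm_add_nat_le_succ hs n)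
    rw [← div_div, norm_div]
    gcongr
    exact norm_one_div_add_nat_sq_le hs h0 n
  · gcongr
    exact re_trigamma_le hpos

lemma norm_mul_trigamma_sub_one_le (hs : 0 ≤ s.re) (h8 : 8 ≤ ‖s‖) :
    ‖s * trigamma s - 1‖ ≤ 1 / 2 := by
  have hpos : 0 < ‖s‖ := by linarith
  have h0 : s ≠ 0 := norm_pos_iff.1 hpos
  calc ‖s * trigamma s - 1‖ = ‖s‖ * ‖trigamma s - 1 / s‖ := by
        rw [← norm_mul, mul_sub, mul_one_div_cancel h0]
    _ ≤ ‖s‖ * (2 * (1 / ‖s‖ ^ 2 + 1 / ‖s‖) / ‖s‖) := by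
        gcongr
        exact norm_trigamma_sub_one_div_le hs h0
    _ = 2 * (1 / ‖s‖ ^ 2 + 1 / ‖s‖) := by field_simp
    _ ≤ 2 * (1 / 8 ^ 2 + 1 / 8) := by gcongr
    _ ≤ 1 / 2 := by norm_num

lemma trigamma_ne_zero (hs : 0 ≤ s.re) (h0 : s ≠ 0) : trigamma s ≠ 0 := by
  intro h
  by_cases him : s.im = 0
  · have hre : 0 < s.re := hs.lt_of_ne' fun hre => h0 (Complex.ext hre him)
    have hle := one_div_le_re_trigamma hre
    rw [show (s.re : ℂ) = s from Complex.ext rfl him.symm, h, zero_re] at hle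
    exact (one_div_pos.2 hre).not_ge hle
  · have hneg := im_mul_im_trigamma_neg hs him
    rw [h, zero_im, mul_zero] at hneg
    exact hneg.false

lemma re_tsum_int_one_div_add_sq_nonpos (hy : 0 < y) :
    (∑' n : ℤ, 1 / (y * I + n) ^ 2).re ≤ 0 := by
  have hq := EisensteinSeries.qExpansion_identity le_rfl ⟨y * I, by simpa using hy⟩
  have hexp : (2 * Real.pi * I * (y * I) : ℂ) = (-(2 * Real.pi * y) : ℝ) := by
    push_cast
    linear_combination (2 * Real.pi * y : ℂ) * I_mul_I
  have hreal : ∑' n : ℤ, 1 / (y * I + n) ^ 2 =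
      ((-(4 * Real.pi ^ 2) * ∑' n : ℕ, n * Real.exp (-(2 * Real.pi * y)) ^ n : ℝ) : ℂ) := by
    simp only [hexp, one_add_one_eq_two, mul_pow, I_sq, pow_one,
      Nat.factorial_one, Nat.cast_one] at hq
    rw [hq]
    push_cast
    ring
  rw [hreal, ofReal_re, neg_mul, neg_nonpos]
  exact mul_nonneg (by positivity) (tsum_nonneg fun n => by positivity)

lemma re_trigamma_mul_I_nonpos (hy : 0 < y) : (trigamma (y * I)).re ≤ 0 := by
  have hreflect := trigamma_add_trigamma_one_sub (y * I)
  have hconj : (1 : ℂ) - y * I = conj (y * I + 1) := by simp [sub_eq_add_neg, add_comm]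
  have hrec := congrArg re (trigamma_eq_one_div_sq_add (y * I))
  have hpole : (1 / (y * I : ℂ) ^ 2) = ((-(1 / y ^ 2) : ℝ) : ℂ) := by
    rw [mul_pow, I_sq]
    push_cast
    ring
  have hsum := re_tsum_int_one_div_add_sq_nonpos hy
  rw [← hreflect, hconj, trigamma_conj, add_re, conj_re] at hsum
  rw [add_re, hpole, ofReal_re] at hrec
  have : 0 < 1 / y ^ 2 := by positivity
  linarith

lemma tsum_I_div_sq (s : ℂ) :
    ∑' n : ℕ, I / (I * (s - 1 / 2) + ((n : ℂ) + 1 / 2) * I) ^ 2 = -I * trigamma s := by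
  rw [trigamma, ← tsum_mul_left]
  refine tsum_congr fun n => ?_
  have hsq : (I * (s - 1 / 2) + ((n : ℂ) + 1 / 2) * I) ^ 2 = -(s + n) ^ 2 := by
    linear_combination (s + n) ^ 2 * I_sq
  rw [hsq, div_neg]
  ring

end Trigamma

/-- The reciprocal `1 / ψ₁` of the trigamma function. The recurrence `ψ₁(s) = 1 / s² + ψ₁(s + 1)`
removes its singularity at `0`. -/
noncomputable def recipTrigamma (s : ℂ) : ℂ := s ^ 2 / (1 + s ^ 2 * trigamma (s + 1))

section RecipTrigamma

variable {s : ℂ}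

lemma one_add_sq_mul_trigamma_add_one (h0 : s ≠ 0) :
    1 + s ^ 2 * trigamma (s + 1) = s ^ 2 * trigamma s := by
  rw [trigamma_eq_one_div_sq_add s]
  field_simp

lemma one_add_sq_mul_trigamma_add_one_ne_zero (hs : 0 ≤ s.re) :
    1 + s ^ 2 * trigamma (s + 1) ≠ 0 := by
  rcases eq_or_ne s 0 with rfl | h0
  · simp
  · rw [one_add_sq_mul_trigamma_add_one h0]
    exact mul_ne_zero (pow_ne_zero 2 h0) (trigamma_ne_zero hs h0)

lemma recipTrigamma_eq_inv (h0 : s ≠ 0) : recipTrigamma s = (trigamma s)⁻¹ := by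
  rw [recipTrigamma, one_add_sq_mul_trigamma_add_one h0,
    div_mul_cancel_left₀ (pow_ne_zero 2 h0)]

lemma recipTrigamma_conj (s : ℂ) : recipTrigamma (conj s) = conj (recipTrigamma s) := by
  simp only [recipTrigamma, map_div₀, map_add, map_mul, map_pow, map_one, ← trigamma_conj]

lemma differentiableAt_recipTrigamma (hs : 0 ≤ s.re) : DifferentiableAt ℂ recipTrigamma s := by
  have htri : DifferentiableAt ℂ trigamma (s + 1) := differentiableOn_trigamma.differentiableAt
    (isOpen_rightHalfPlane.mem_nhds (by rw [mem_ofPred_eq, add_re, one_re]; positivity))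
  have hshift : DifferentiableAt ℂ (fun z => trigamma (z + 1)) s :=
    htri.comp s (differentiableAt_id.add_const 1)
  have hne := one_add_sq_mul_trigamma_add_one_ne_zero hs
  unfold recipTrigamma
  fun_prop (disch := exact hne)

lemma re_recipTrigamma_mul_I_nonpos (y : ℝ) : (recipTrigamma (y * I)).re ≤ 0 := by
  have hpos : ∀ y : ℝ, 0 < y → (recipTrigamma (y * I)).re ≤ 0 := fun y hy => by
    rw [recipTrigamma_eq_inv (by simpa using hy.ne'), inv_re]
    exact div_nonpos_of_nonpos_of_nonneg (re_trigamma_mul_I_nonpos hy) (normSq_nonneg _)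
  rcases lt_trichotomy y 0 with hy | rfl | hy
  · have h := hpos (-y) (neg_pos.2 hy)
    have hconj : ((-y : ℝ) * I : ℂ) = conj (y * I) := by simp
    rwa [hconj, recipTrigamma_conj, conj_re] at h
  · simp [recipTrigamma]
  · exact hpos y hy

lemma recipTrigamma_ofReal_mem_Ioc {x : ℝ} (hx : 0 < x) :
    (recipTrigamma x).re ∈ Ioc 0 x := by
  have hle := one_div_le_re_trigamma hx
  have hpos := (one_div_pos.2 hx).trans_le hle
  rw [recipTrigamma_eq_inv (mod_cast hx.ne')]
  rw [trigamma_ofReal] at hle hpos ⊢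
  norm_cast at hle hpos ⊢
  exact ⟨inv_pos.2 hpos, inv_le_of_inv_le₀ hx (one_div x ▸ hle)⟩

lemma norm_recipTrigamma_bounds (hs : 0 ≤ s.re) (h8 : 8 ≤ ‖s‖) :
    ‖s‖ / 2 ≤ ‖recipTrigamma s‖ ∧ ‖recipTrigamma s‖ ≤ 2 * ‖s‖ := by
  have h0 : s ≠ 0 := norm_pos_iff.1 (by linarith)
  have hT : 0 < ‖trigamma s‖ := norm_pos_iff.2 (trigamma_ne_zero hs h0)
  have hclose := norm_mul_trigamma_sub_one_le hs h8
  have hupper := norm_sub_norm_le (s * trigamma s) 1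
  have hlower := norm_sub_norm_le 1 (s * trigamma s)
  rw [norm_sub_rev] at hlower
  rw [norm_one, norm_mul] at hupper hlower
  rw [recipTrigamma_eq_inv h0, norm_inv, inv_eq_one_div]
  constructor
  · rw [le_div_iff₀ hT]
    linarith
  · rw [div_le_iff₀ hT]
    linarith

lemma tendsto_recipTrigamma_cobounded :
    Tendsto recipTrigamma (cobounded ℂ ⊓ 𝓟 {s | 0 < s.re}) (cobounded ℂ) := by
  rw [← tendsto_norm_atTop_iff_cobounded]
  refine tendsto_atTop_mono' _ ?_
    ((tendsto_norm_cobounded_atTop.atTop_div_const two_pos).mono_left inf_le_left)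
  rw [EventuallyLE, eventually_inf_principal]
  filter_upwards [tendsto_norm_cobounded_atTop.eventually_ge_atTop 8] with s h8 hs
  exact (norm_recipTrigamma_bounds (le_of_lt hs) h8).1

lemma re_recipTrigamma_le (hs : 0 ≤ s.re) : (recipTrigamma s).re ≤ s.re := by
  have hnorm : ∀ z, ‖cexp (recipTrigamma z - z)‖ ≤ 1 ↔ (recipTrigamma z).re ≤ z.re := fun z => by
    rw [norm_exp, Real.exp_le_one_iff, sub_re, sub_nonpos]
  refine (hnorm s).1 (PhragmenLindelof.right_half_plane_of_bounded_on_real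
    (f := fun z => cexp (recipTrigamma z - z)) ?_ ⟨1, one_lt_two, 3, ?_⟩ ?_ (fun y => ?_) hs)
  · refine DifferentiableOn.diffContOnCl fun z hz => ?_
    rw [closure_setOfPred_lt_re] at hz
    have := differentiableAt_recipTrigamma hz
    exact DifferentiableAt.differentiableWithinAt (by fun_prop)
  · refine Asymptotics.IsBigO.of_bound 1 (eventually_inf_principal.2 ?_)
    filter_upwards [tendsto_norm_cobounded_atTop.eventually_ge_atTop 8] with z h8 hz
    rw [norm_exp, one_mul, Real.norm_eq_abs, Real.abs_exp, Real.exp_le_exp, Real.rpow_one]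
    calc (recipTrigamma z - z).re ≤ ‖recipTrigamma z‖ + ‖z‖ :=
          (re_le_norm _).trans (norm_sub_le _ _)
      _ ≤ 2 * ‖z‖ + ‖z‖ := by grw [(norm_recipTrigamma_bounds (le_of_lt hz) h8).2]
      _ = 3 * ‖z‖ := by ring
  · refine isBoundedUnder_of_eventually_le (a := 1) ?_
    filter_upwards [eventually_gt_atTop 0] with x hx
    exact (hnorm x).2 (recipTrigamma_ofReal_mem_Ioc hx).2
  · exact (hnorm _).2 (by simpa using re_recipTrigamma_mul_I_nonpos y)

end RecipTrigamma

/-- The reciprocal Cauchy transform of the logistic distribution has a univalent right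
inverse defined on all of `ℂ⁺`: there is an injective analytic map
`H : ℂ⁺ → {Im w > −1/2}` with `∑_{n=1}^∞ i/(H(z) + (n − 1/2)i)² = 1/z` for `z ∈ ℂ⁺`.
In other words, the logistic distribution belongs to the class `UI` of freely infinitely
divisible measures. -/
theorem logistic_UI :
    ∃ H : ℂ → ℂ,
      Set.InjOn H {z : ℂ | 0 < z.im} ∧
      DifferentiableOn ℂ H {z : ℂ | 0 < z.im} ∧
      Set.MapsTo H {z : ℂ | 0 < z.im} {w : ℂ | -(1 / 2 : ℝ) < w.im} ∧
      ∀ z : ℂ, 0 < z.im →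
        (∑' n : ℕ, Complex.I / (H z + ((n : ℂ) + 1 / 2) * Complex.I) ^ 2) = 1 / z := by
  obtain ⟨g, hg, hmaps, hright⟩ := exists_rightInvOn_of_re_le
    (fun s hs => (differentiableAt_recipTrigamma (le_of_lt hs)).differentiableWithinAt)
    (fun s hs => re_recipTrigamma_le hs.le) tendsto_recipTrigamma_cobounded
    ⟨(1 : ℝ), by simp, (recipTrigamma_ofReal_mem_Ioc one_pos).1⟩
  have hrot : MapsTo (fun z => -I * z) {z : ℂ | 0 < z.im} {s : ℂ | 0 < s.re} := by simp [MapsTo]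
  have hseries : ∀ z : ℂ, 0 < z.im →
      ∑' n : ℕ, I / (I * (g (-I * z) - 1 / 2) + ((n : ℂ) + 1 / 2) * I) ^ 2 = 1 / z := by
    intro z hz
    have hgz : g (-I * z) ≠ 0 := fun h => lt_irrefl (0 : ℝ) <| by
      simpa only [h, mem_ofPred_eq, zero_re] using hmaps (hrot hz)
    have hinv : (trigamma (g (-I * z)))⁻¹ = -I * z := recipTrigamma_eq_inv hgz ▸ hright (hrot hz)
    rw [tsum_I_div_sq, ← inv_inv (trigamma _), hinv, mul_inv, mul_inv_cancel_left₀ (by simp),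
      one_div]
  refine ⟨fun z => I * (g (-I * z) - 1 / 2), fun a ha b hb hab => ?_, ?_, fun z hz => ?_, hseries⟩
  · have h := hseries a ha
    simp only at hab
    rw [hab, hseries b hb] at h
    simpa using h.symm
  · exact ((hg.comp (by fun_prop) hrot).sub_const _).const_mul I
  · have := hmaps (hrot hz)
    simpa using this
end
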